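/- Proper existential quantification in LPQ⊃,F: for every finite set Γ of formulas, all formulas A1, A2 of LPQ⊃,F(Σ), and every variable x with x not free in Γ ∪ {A2}, Γ ∪ {∃xA1} ⊨ A2 if and only if Γ ∪ {A1} ⊨ A2. -/

import Mathlib

namespace LPQ

/-- The three truth values: true, false, both-true-and-false. -/
inductive TV : Type where
  | t : TV
  | f : TV
  | b : TV
deriving DecidableEq

/-- A first-order signature: function symbols and predicate symbols of each arity. -/
structure Signature : Type 1 where
  Func : ℕ → Type
  Pred : ℕ → Type

/-- Terms over a signature (variables are natural numbers). -/
inductive Term (σ : Signature) : Type where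
  | var : ℕ → Term σ
  | func : {n : ℕ} → σ.Func n → (Fin n → Term σ) → Term σ

/-- Formulas of LPQ⊃,F over a signature. -/
inductive Formula (σ : Signature) : Type where
  | falsum : Formula σ
  | pred : {n : ℕ} → σ.Pred n → (Fin n → Term σ) → Formula σ
  | eq : Term σ → Term σ → Formula σ
  | neg : Formula σ → Formula σ
  | and : Formula σ → Formula σ → Formula σ
  | or : Formula σ → Formula σ → Formula σ
  | imp : Formula σ → Formula σ → Formula σ
  | all : ℕ → Formula σ → Formula σ
  | ex : ℕ → Formula σ → Formula σ

variable {σ : Signature}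

/-- Free variables of a term. -/
def Term.fv : Term σ → Set ℕ
  | .var x => {x}
  | .func _ ts => ⋃ i, (ts i).fv

/-- Free variables of a formula. -/
def Formula.fv : Formula σ → Set ℕ
  | .falsum => ∅
  | .pred _ ts => ⋃ i, (ts i).fv
  | .eq u v => u.fv ∪ v.fv
  | .neg A => A.fv
  | .and A B => A.fv ∪ B.fv
  | .or A B => A.fv ∪ B.fv
  | .imp A B => A.fv ∪ B.fv
  | .all x A => A.fv \ {x}
  | .ex x A => A.fv \ {x}

/-- A structure of LPQ⊃,F(σ): a nonempty domain, interpretations of the function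
symbols, three-valued interpretations of the predicate symbols, and a three-valued
interpretation of equality which is designated on the diagonal. -/
structure Structure (σ : Signature) : Type 1 where
  Dom : Type
  nonempty : Nonempty Dom
  interpFunc : {n : ℕ} → σ.Func n → (Fin n → Dom) → Dom
  interpPred : {n : ℕ} → σ.Pred n → (Fin n → Dom) → TV
  interpEq : Dom → Dom → TV
  interpEq_refl : ∀ d, interpEq d d = TV.t ∨ interpEq d d = TV.b

/-- Value of a term in a structure under an assignment. -/
def Term.eval (M : Structure σ) (α : ℕ → M.Dom) : Term σ → M.Dom
  | .var x => α x
  | .func f ts => M.interpFunc f (fun i => (ts i).eval M α)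

open Classical in
/-- The three-valued interpretation of formulas of LPQ⊃,F. -/
noncomputable def Formula.eval (M : Structure σ) : (ℕ → M.Dom) → Formula σ → TV
  | α, .pred P ts => M.interpPred P (fun i => (ts i).eval M α)
  | α, .eq u v => M.interpEq (u.eval M α) (v.eval M α)
  | _, .falsum => TV.f
  | α, .neg A =>
      match A.eval M α with
      | TV.t => TV.f
      | TV.f => TV.t
      | TV.b => TV.b
  | α, .and A B =>
      match A.eval M α, B.eval M α with
      | TV.t, TV.t => TV.t
      | TV.f, _ => TV.f
      | _, TV.f => TV.f
      | _, _ => TV.b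
  | α, .or A B =>
      match A.eval M α, B.eval M α with
      | TV.t, _ => TV.t
      | _, TV.t => TV.t
      | TV.f, TV.f => TV.f
      | _, _ => TV.b
  | α, .imp A B =>
      match A.eval M α, B.eval M α with
      | TV.f, _ => TV.t
      | _, TV.t => TV.t
      | _, TV.f => TV.f
      | _, _ => TV.b
  | α, .all x A =>
      if ∀ d, Formula.eval M (Function.update α x d) A = TV.t then TV.t
      else if ∃ d, Formula.eval M (Function.update α x d) A = TV.f then TV.f
      else TV.b
  | α, .ex x A =>
      if ∃ d, Formula.eval M (Function.update α x d) A = TV.t then TV.t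
      else if ∀ d, Formula.eval M (Function.update α x d) A = TV.f then TV.f
      else TV.b

/-- Logical consequence of LPQ⊃,F: in every structure under every assignment,
either some premise is false or the conclusion is true or both-true-and-false. -/
def LCon (Γ : Set (Formula σ)) (A : Formula σ) : Prop :=
  ∀ (M : Structure σ) (α : ℕ → M.Dom),
    (∃ B ∈ Γ, B.eval M α = TV.f) ∨ (A.eval M α = TV.t ∨ A.eval M α = TV.b)

/-- Logical equivalence of LPQ⊃,F: the same truth value in every structure
under every assignment. -/
def LEqv (A1 A2 : Formula σ) : Prop :=
  ∀ (M : Structure σ) (α : ℕ → M.Dom), A1.eval M α = A2.eval M α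

end LPQ

/-!
A formula is designated when it is not false, and on designation `∃` behaves classically: `∃x A` is
designated under `α` iff `A` is designated under some `x`-variant of `α`. Since `x` is not free in
`Γ` or `A2`, passing from `α` to an `x`-variant changes none of their values. The universal
quantifier over assignments in `⊨` therefore absorbs the choice of the witness for `x`.
-/

namespace LPQ

theorem eqOn_update_of_eqOn_diff {ι κ : Type*} [DecidableEq ι] {f g : ι → κ} {s : Set ι} {i : ι}
    (h : Set.EqOn f g (s \ {i})) (a : κ) :
    Set.EqOn (Function.update f i a) (Function.update g i a) s := by
  intro j hj
  obtain rfl | hji := eq_or_ne j i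
  · simp
  · simpa [hji] using h ⟨hj, hji⟩

section

variable {σ : Signature} {M : Structure σ} {α β : ℕ → M.Dom} {x : ℕ}

theorem Term.eval_congr {u : Term σ} (h : Set.EqOn α β u.fv) : u.eval M α = u.eval M β := by
  induction u with
  | var x => exact h rfl
  | func f ts ih =>
    have eval_args : ∀ i, (ts i).eval M α = (ts i).eval M β := fun i =>
      ih i (h.mono (Set.subset_iUnion (fun i => (ts i).fv) i))
    simp only [Term.eval, eval_args]

theorem Formula.eval_congr {A : Formula σ} (h : Set.EqOn α β A.fv) :
    A.eval M α = A.eval M β := by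
  induction A generalizing α β with
  | falsum => simp only [Formula.eval]
  | pred P ts =>
    have eval_args : ∀ i, (ts i).eval M α = (ts i).eval M β := fun i =>
      Term.eval_congr (h.mono (Set.subset_iUnion (fun i => (ts i).fv) i))
    simp only [Formula.eval, eval_args]
  | eq u v =>
    obtain ⟨hu, hv⟩ := Set.eqOn_union.1 h
    simp only [Formula.eval, Term.eval_congr hu, Term.eval_congr hv]
  | neg A ih => simp only [Formula.eval, ih h]
  | and A B ihA ihB | or A B ihA ihB | imp A B ihA ihB =>
    obtain ⟨hA, hB⟩ := Set.eqOn_union.1 h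
    simp only [Formula.eval, ihA hA, ihB hB]
  | all y A ih | ex y A ih =>
    have eval_body : ∀ d, A.eval M (Function.update α y d) = A.eval M (Function.update β y d) :=
      fun d => ih (eqOn_update_of_eqOn_diff h d)
    classical simp only [Formula.eval, eval_body]

theorem Formula.eval_update_of_notMem_fv {A : Formula σ} (hx : x ∉ A.fv) (d : M.Dom) :
    A.eval M (Function.update α x d) = A.eval M α :=
  Formula.eval_congr fun _ hy => Function.update_of_ne (ne_of_mem_of_not_mem hy hx) _ _

/-- Satisfaction of a formula in a structure under an assignment: its value is designated, that is,
`t` or `b`. It is encoded as not being `f`. -/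
def Structure.Satisfies (M : Structure σ) (α : ℕ → M.Dom) (A : Formula σ) : Prop :=
  A.eval M α ≠ TV.f

theorem Structure.satisfies_iff {A : Formula σ} :
    M.Satisfies α A ↔ A.eval M α = TV.t ∨ A.eval M α = TV.b := by
  unfold Structure.Satisfies
  cases A.eval M α <;> simp

theorem Structure.satisfies_ex_iff {A : Formula σ} :
    M.Satisfies α (.ex x A) ↔ ∃ d, M.Satisfies (Function.update α x d) A := by
  simp only [Structure.Satisfies, Formula.eval]
  split_ifs with some_t all_f
  · obtain ⟨d, hd⟩ := some_t
    exact iff_of_true TV.noConfusion ⟨d, by simp [hd]⟩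
  · simp [all_f]
  · simpa using all_f

theorem Structure.satisfies_update_iff_of_notMem_fv {A : Formula σ} (hx : x ∉ A.fv) (d : M.Dom) :
    M.Satisfies (Function.update α x d) A ↔ M.Satisfies α A := by
  rw [Structure.Satisfies, Formula.eval_update_of_notMem_fv hx, Structure.Satisfies]

theorem lcon_iff_satisfies {Γ : Set (Formula σ)} {A : Formula σ} :
    LCon Γ A ↔ ∀ (M : Structure σ) (α : ℕ → M.Dom),
      (∀ B ∈ Γ, M.Satisfies α B) → M.Satisfies α A := by
  refine forall₂_congr fun M α => ?_
  rw [← Structure.satisfies_iff, or_iff_not_imp_left]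
  simp only [Structure.Satisfies, not_exists, not_and, ne_eq]

theorem lcon_union_singleton_iff {Γ : Set (Formula σ)} {A B : Formula σ} :
    LCon (Γ ∪ {B}) A ↔ ∀ (M : Structure σ) (α : ℕ → M.Dom),
      (∀ C ∈ Γ, M.Satisfies α C) → M.Satisfies α B → M.Satisfies α A := by
  simp only [lcon_iff_satisfies, Set.union_singleton, Set.forall_mem_insert, and_imp]
  exact forall₂_congr fun _ _ => forall_comm

theorem proper_existential_quantification_general {Γ : Set (Formula σ)} {A1 A2 : Formula σ}
    (hx : ∀ B ∈ Γ, x ∉ B.fv) (hx2 : x ∉ A2.fv) :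
    LCon (Γ ∪ {.ex x A1}) A2 ↔ LCon (Γ ∪ {A1}) A2 := by
  simp only [lcon_union_singleton_iff, Structure.satisfies_ex_iff]
  constructor
  · intro ex_entails M α hΓ hA1
    exact ex_entails M α hΓ ⟨α x, by rwa [Function.update_eq_self]⟩
  · rintro entails M α hΓ ⟨d, hd⟩
    have hΓ_update : ∀ B ∈ Γ, M.Satisfies (Function.update α x d) B := fun B hB =>
      (Structure.satisfies_update_iff_of_notMem_fv (hx B hB) d).2 (hΓ B hB)
    exact (Structure.satisfies_update_iff_of_notMem_fv hx2 d).1 (entails M _ hΓ_update hd)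

end

/-- **Proper existential quantification in LPQ⊃,F**: for every finite set Γ of
formulas, all formulas A1, A2 and every variable x not free in Γ ∪ {A2},
Γ ∪ {∃xA1} ⊨ A2 iff Γ ∪ {A1} ⊨ A2. -/
theorem proper_existential_quantification (σ : Signature) (Γ : Set (Formula σ))
    (hΓ : Γ.Finite) (A1 A2 : Formula σ) (x : ℕ)
    (hx : ∀ B ∈ Γ, x ∉ Formula.fv B) (hx2 : x ∉ Formula.fv A2) :
    LCon (Γ ∪ {Formula.ex x A1}) A2 ↔ LCon (Γ ∪ {A1}) A2 :=
  proper_existential_quantification_general hx hx2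

end LPQ
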